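/- One has ρ_1 = ∫_ℝ (2·(s − log 2) + 1)·η_log(s) ds = 12·ζ(3)/π² − 2·log 2, where ζ is the Riemann zeta function. -/

import Mathlib

open MeasureTheory

/-- The limiting density of the logarithm of smallest denominators. -/
noncomputable def etaLog (s : ℝ) : ℝ :=
  if s ≤ 0 then 6 / Real.pi ^ 2 * Real.exp (2 * s)
  else if s ≤ Real.log 2 then 6 / Real.pi ^ 2 * (-Real.exp (2 * s) + 2 + 4 * s)
  else 6 / Real.pi ^ 2 * (-Real.exp (2 * s) + 2
    + 2 * Real.exp (2 * s) * Real.sqrt (1 / 4 - Real.exp (-2 * s))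
    - 4 * Real.log (1 / 2 + Real.sqrt (1 / 4 - Real.exp (-2 * s))))

open Filter Topology Set

/-- Normalised polylogarithm: `x * polyS k x = Li_k(x)`. -/
noncomputable def polyS (k : ℕ) (x : ℝ) : ℝ := ∑' n : ℕ, x ^ n / ((n : ℝ) + 1) ^ k

/-- The polylogarithm. -/
noncomputable def polyLi (k : ℕ) (x : ℝ) : ℝ := ∑' n : ℕ, x ^ (n + 1) / ((n : ℝ) + 1) ^ k

lemma polyLi_eq (k : ℕ) (x : ℝ) : polyLi k x = x * polyS k x := by
  unfold polyLi polyS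
  rw [← tsum_mul_left]
  congr 1; ext n; ring

lemma summable_inv_pow (k : ℕ) (hk : 2 ≤ k) :
    Summable (fun n : ℕ => 1 / ((n : ℝ) + 1) ^ k) := by
  have h := (summable_nat_add_iff 1).2 (Real.summable_one_div_nat_pow.2 (show 1 < k by omega))
  simpa using h

lemma polyS_cont (k : ℕ) (hk : 2 ≤ k) : ContinuousOn (polyS k) (Icc 0 1) := by
  unfold polyS
  refine continuousOn_tsum (u := fun n : ℕ => 1 / ((n : ℝ) + 1) ^ k) ?_ (summable_inv_pow k hk) ?_
  · intro n; fun_prop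
  · intro n x hx
    have h1 : x ^ n ≤ 1 := pow_le_one₀ hx.1 hx.2
    have h0 : 0 ≤ x ^ n := pow_nonneg hx.1 n
    rw [Real.norm_of_nonneg (by positivity)]
    gcongr

lemma polyLi_cont (k : ℕ) (hk : 2 ≤ k) : ContinuousOn (polyLi k) (Icc 0 1) := by
  have : polyLi k = fun x => x * polyS k x := funext (polyLi_eq k)
  rw [this]
  exact continuousOn_id.mul (polyS_cont k hk)

lemma polyLi_deriv (k : ℕ) {x : ℝ} (h0 : 0 < x) (h1 : x < 1) :
    HasDerivAt (polyLi (k + 1)) (polyS k x) x := by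
  obtain ⟨r, hxr, hr1⟩ := exists_between h1
  have hr0 : 0 < r := h0.trans hxr
  unfold polyLi polyS
  refine hasDerivAt_tsum_of_isPreconnected (u := fun n => r ^ n) (t := Ioo 0 r) (y₀ := x)
    (g := fun (n : ℕ) (z : ℝ) => z ^ (n + 1) / ((n : ℝ) + 1) ^ (k + 1))
    (g' := fun (n : ℕ) (z : ℝ) => z ^ n / ((n : ℝ) + 1) ^ k)
    (summable_geometric_of_lt_one hr0.le hr1) isOpen_Ioo isPreconnected_Ioo ?_ ?_ ⟨h0, hxr⟩ ?_
    ⟨h0, hxr⟩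
  · intro n y hy
    have := (hasDerivAt_pow (n + 1) y).div_const (((n : ℝ) + 1) ^ (k + 1))
    convert! this using 1
    have : (n : ℝ) + 1 ≠ 0 := by positivity
    push_cast
    field_simp
    ring
  · intro n y hy
    have hy0 := hy.1
    rw [Real.norm_of_nonneg (by positivity)]
    have h2 : y ^ n ≤ r ^ n := by gcongr; exact hy.2.le
    have h3 : (1 : ℝ) ≤ ((n : ℝ) + 1) ^ k := one_le_pow₀ (by linarith [Nat.cast_nonneg (α := ℝ) n])
    calc y ^ n / ((n : ℝ) + 1) ^ k ≤ y ^ n / 1 := by gcongr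
      _ ≤ r ^ n := by simpa using h2
  · refine Summable.of_nonneg_of_le (fun n => by positivity) (fun n => ?_)
      (summable_geometric_of_lt_one h0.le h1)
    have h3 : (1 : ℝ) ≤ ((n : ℝ) + 1) ^ (k + 1) :=
      one_le_pow₀ (by linarith [Nat.cast_nonneg (α := ℝ) n])
    calc x ^ (n + 1) / ((n : ℝ) + 1) ^ (k + 1) ≤ x ^ (n + 1) / 1 := by gcongr
      _ ≤ x ^ n := by
        rw [div_one]; exact pow_le_pow_of_le_one h0.le h1.le (by omega)

lemma polyLi_one {x : ℝ} (h0 : 0 < x) (h1 : x < 1) : polyLi 1 x = -Real.log (1 - x) := by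
  have := Real.hasSum_pow_div_log_of_abs_lt_one (x := x) (by rw [abs_of_pos h0]; exact h1)
  unfold polyLi
  simpa using this.tsum_eq

lemma polyLi_two_deriv {x : ℝ} (h0 : 0 < x) (h1 : x < 1) :
    HasDerivAt (polyLi 2) (-Real.log (1 - x) / x) x := by
  have := polyLi_deriv 1 h0 h1
  convert! this using 1
  rw [← polyLi_one h0 h1, polyLi_eq]
  field_simp

lemma polyLi_three_deriv {x : ℝ} (h0 : 0 < x) (h1 : x < 1) :
    HasDerivAt (polyLi 3) (polyLi 2 x / x) x := by
  have := polyLi_deriv 2 h0 h1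
  convert! this using 1
  rw [polyLi_eq]
  field_simp

lemma polyLi_two_at_one : polyLi 2 1 = Real.pi ^ 2 / 6 := by
  have h := (hasSum_nat_add_iff' 1).2 hasSum_zeta_two
  unfold polyLi
  simpa using h.tsum_eq

lemma polyLi_three_at_one : polyLi 3 1 = (riemannZeta 3).re := by
  have h := zeta_nat_eq_tsum_of_gt_one (k := 3) (by norm_num)
  have h2 : riemannZeta 3 = ((∑' n : ℕ, 1 / (n : ℝ) ^ 3 : ℝ) : ℂ) := by
    push_cast at h ⊢
    exact h
  rw [h2, Complex.ofReal_re, 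
    (Real.summable_one_div_nat_pow.2 (by norm_num : 1 < 3)).tsum_eq_zero_add]
  unfold polyLi
  simp

/-- Antiderivative of `log x * log (1 - x) / x`. -/
noncomputable def GG (x : ℝ) : ℝ := polyLi 3 x - Real.log x * polyLi 2 x

lemma GG_deriv {x : ℝ} (h0 : 0 < x) (h1 : x < 1) :
    HasDerivAt GG (Real.log x * Real.log (1 - x) / x) x := by
  have := (polyLi_three_deriv h0 h1).sub ((Real.hasDerivAt_log h0.ne').mul (polyLi_two_deriv h0 h1))
  convert! this using 1
  field_simp
  ring

/-- log part. -/
noncomputable def DD (x : ℝ) : ℝ := GG x - GG (1 - x)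
/-- dilog part. -/
noncomputable def MM (x : ℝ) : ℝ := polyLi 2 (1 - x) - polyLi 2 x

lemma DD_deriv {x : ℝ} (h0 : 0 < x) (h1 : x < 1) :
    HasDerivAt DD (Real.log x * Real.log (1 - x) / x + Real.log x * Real.log (1 - x) / (1 - x)) x := by
  have h := GG_deriv (x := 1 - x) (by linarith) (by linarith)
  have := (GG_deriv h0 h1).sub (h.comp x ((hasDerivAt_id x).const_sub 1))
  convert! this using 1
  simp only [sub_sub_cancel]
  ring

lemma MM_deriv {x : ℝ} (h0 : 0 < x) (h1 : x < 1) :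
    HasDerivAt MM (Real.log (1 - x) / x + Real.log x / (1 - x)) x := by
  have h := polyLi_two_deriv (x := 1 - x) (by linarith) (by linarith)
  have := (h.comp x ((hasDerivAt_id x).const_sub 1)).sub (polyLi_two_deriv h0 h1)
  convert! this using 1
  simp only [sub_sub_cancel]
  ring

lemma tend_li {k : ℕ} (hk : 2 ≤ k) : Tendsto (polyLi k) (𝓝[<] 1) (𝓝 (polyLi k 1)) := by
  have h := polyLi_cont k hk 1 (by simp)
  refine h.mono_left ?_
  rw [← nhdsWithin_Ioo_eq_nhdsLT (show (0:ℝ) < 1 by norm_num)]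
  exact nhdsWithin_mono _ Ioo_subset_Icc_self

lemma tend_S0 {k : ℕ} (hk : 2 ≤ k) : Tendsto (polyS k) (𝓝[>] 0) (𝓝 (polyS k 0)) := by
  have h := polyS_cont k hk 0 (by simp)
  refine h.mono_left ?_
  rw [← nhdsWithin_Ioo_eq_nhdsGT (show (0:ℝ) < 1 by norm_num)]
  exact nhdsWithin_mono _ Ioo_subset_Icc_self

lemma tend_id0 : Tendsto (fun x : ℝ => x) (𝓝[>] 0) (𝓝 0) := tendsto_id.mono_left nhdsWithin_le_nhds

lemma tend_li0 {k : ℕ} (hk : 2 ≤ k) : Tendsto (polyLi k) (𝓝[>] 0) (𝓝 0) := by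
  have := tend_id0.mul (tend_S0 hk)
  rw [zero_mul] at this
  exact this.congr (fun x => (polyLi_eq k x).symm)

lemma tend_y_log : Tendsto (fun y : ℝ => y * Real.log y) (𝓝[>] 0) (𝓝 0) := by
  have := tendsto_log_mul_rpow_nhdsGT_zero (r := 1) one_pos
  refine this.congr fun x => ?_
  rw [Real.rpow_one, mul_comm]

lemma tend_y_log2 : Tendsto (fun y : ℝ => y * Real.log y ^ 2) (𝓝[>] 0) (𝓝 0) := by
  have := tendsto_log_mul_rpow_nhdsGT_zero (r := 1 / 2) (by norm_num)
  have h := this.mul this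
  rw [zero_mul] at h
  refine h.congr' ?_
  filter_upwards [self_mem_nhdsWithin] with x hx
  have : x ^ (1 / 2 : ℝ) * x ^ (1 / 2 : ℝ) = x := by
    rw [← Real.rpow_add hx]; norm_num
  linear_combination (Real.log x) ^ 2 * this

lemma tend_GG0 : Tendsto GG (𝓝[>] 0) (𝓝 0) := by
  have := (tend_li0 (k := 3) (by norm_num)).sub (tend_y_log.mul (tend_S0 (k := 2) le_rfl))
  rw [zero_mul, sub_zero] at this
  refine this.congr fun x => ?_
  rw [GG, polyLi_eq 2]; ring

lemma tend_one_sub : Tendsto (fun x : ℝ => 1 - x) (𝓝[<] 1) (𝓝[>] 0) := by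
  rw [tendsto_nhdsWithin_iff]
  constructor
  · have : Tendsto (fun x : ℝ => 1 - x) (𝓝 1) (𝓝 (1 - 1)) := (continuous_const.sub continuous_id).tendsto 1
    rw [sub_self] at this
    exact this.mono_left nhdsWithin_le_nhds
  · filter_upwards [self_mem_nhdsWithin] with x hx
    have hx' : x < 1 := hx
    show 0 < 1 - x
    linarith

lemma tend_log1 : Tendsto Real.log (𝓝[<] 1) (𝓝 0) := by
  have := (Real.continuousAt_log (one_ne_zero)).tendsto
  rw [Real.log_one] at this
  exact this.mono_left nhdsWithin_le_nhds

lemma tend_DD : Tendsto DD (𝓝[<] 1) (𝓝 (riemannZeta 3).re) := by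
  have := ((tend_li (k := 3) (by norm_num)).sub (tend_log1.mul (tend_li (k := 2) le_rfl))).sub
    (tend_GG0.comp tend_one_sub)
  rw [zero_mul, sub_zero, sub_zero, polyLi_three_at_one] at this
  exact this

lemma tend_MM : Tendsto MM (𝓝[<] 1) (𝓝 (-(Real.pi ^ 2 / 6))) := by
  have := ((tend_li0 (k := 2) le_rfl).comp tend_one_sub).sub (tend_li (k := 2) le_rfl)
  rw [zero_sub, polyLi_two_at_one] at this
  exact this

lemma tend_inv1 : Tendsto (fun x : ℝ => 1 / x) (𝓝[<] 1) (𝓝 1) := by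
  have : Tendsto (fun x : ℝ => 1 / x) (𝓝 1) (𝓝 (1 / 1)) :=
    (continuousAt_const.div continuousAt_id one_ne_zero).tendsto
  rw [div_one] at this
  exact this.mono_left nhdsWithin_le_nhds

lemma ev_half : ∀ᶠ x : ℝ in 𝓝[<] 1, 1 / 2 < x ∧ x < 1 := by
  have := Ioo_mem_nhdsLT (show (1 / 2 : ℝ) < 1 by norm_num)
  filter_upwards [this] with x hx using hx

lemma tend_vb (j : ℝ → ℝ) (hj : Tendsto (fun y => y * j y) (𝓝[>] 0) (𝓝 0)) :
    Tendsto (fun x : ℝ => (1 / x - 1) * j (1 - x)) (𝓝[<] 1) (𝓝 0) := by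
  have := tend_inv1.mul (hj.comp tend_one_sub)
  rw [mul_zero] at this
  refine this.congr' ?_
  filter_upwards [ev_half] with x hx
  have : x ≠ 0 := by linarith [hx.1]
  simp only [Function.comp]
  field_simp

lemma tend_ab (j : ℝ → ℝ) (hj : Tendsto (fun y => y * j y) (𝓝[>] 0) (𝓝 0)) :
    Tendsto (fun x : ℝ => Real.log x * j (1 - x)) (𝓝[<] 1) (𝓝 0) := by
  have h := (tend_vb j hj).norm
  rw [norm_zero] at h
  refine squeeze_zero_norm' ?_ h
  filter_upwards [ev_half] with x hx
  have hx0 : 0 < x := by linarith [hx.1]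
  rw [norm_mul, norm_mul]
  gcongr
  rw [Real.norm_of_nonpos (Real.log_nonpos hx0.le hx.2.le)]
  have h1 := Real.log_le_sub_one_of_pos (inv_pos.2 hx0)
  rw [Real.log_inv] at h1
  rw [one_div]
  exact h1.trans (le_abs_self _)

/-- Elementary part of the antiderivative. -/
noncomputable def RR (L a b i : ℝ) : ℝ :=
  ((a ^ 2 + b ^ 2 + 2 * a * b) / 4 + (L - 1 / 2) * (a + b) + L ^ 2 - L) * (2 - 2 * i - 4 * a)
  + a ^ 3 / 3 + a * b ^ 2 + 2 * (L - 1 / 2) * a ^ 2 + 2 * (L - 1 / 2) * a * b + 4 * (L ^ 2 - L) * a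
  + (a ^ 2 + 2 * a + 2) * i / 2 + b ^ 2 * (i - 1) / 2 + a * b * i + b * (i - 1) + a + a ^ 2 / 2
  + 2 * (L - 1 / 2) * (a + 1) * i + 2 * (L - 1 / 2) * (b * (i - 1) + a) + 2 * (L ^ 2 - L) * i

/-- The antiderivative. -/
noncomputable def PP (x : ℝ) : ℝ :=
  2 * DD x + 2 * Real.log 2 * MM x + RR (Real.log 2) (Real.log x) (Real.log (1 - x)) (1 / x)

lemma PP_deriv {x : ℝ} (h0 : 0 < x) (h1 : x < 1) :
    HasDerivAt PP ((1 - 2 * Real.log 2 - Real.log x - Real.log (1 - x)) *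
      (2 - 2 / x - 4 * Real.log x) * (1 / 2) * (1 / (1 - x) - 1 / x)) x := by
  have ha := Real.hasDerivAt_log h0.ne'
  have h1x : 1 - x ≠ 0 := by linarith
  have hb : HasDerivAt (fun x : ℝ => Real.log (1 - x)) (-1 / (1 - x)) x :=
    ((hasDerivAt_id x).const_sub 1).log h1x
  have hi : HasDerivAt (fun x : ℝ => 1 / x) (-1 / x ^ 2) x := by
    have := hasDerivAt_inv h0.ne'
    simp only [one_div]
    convert! this using 1
    field_simp
  have hD := DD_deriv h0 h1
  have hM := MM_deriv h0 h1
  unfold PP RR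
  generalize Real.log 2 = L at *
  have hU := (((((ha.fun_pow 2).fun_add (hb.fun_pow 2)).fun_add ((ha.const_mul 2).fun_mul hb)).div_const 4).fun_add
    ((ha.fun_add hb).const_mul (L - 1 / 2))).add_const (L ^ 2) |>.sub_const L
  have hg := ((hi.const_mul 2).const_sub 2).fun_sub (ha.const_mul 4)
  have hi1 := hi.sub_const 1
  have key := (((((((((((((((hU.fun_mul hg).fun_add ((ha.fun_pow 3).div_const 3)).fun_add (ha.fun_mul (hb.fun_pow 2))).fun_add
    ((ha.fun_pow 2).const_mul (2 * (L - 1 / 2)))).fun_add ((ha.const_mul (2 * (L - 1 / 2))).fun_mul hb)).fun_add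
    (ha.const_mul (4 * (L ^ 2 - L)))).fun_add
    ((((((ha.fun_pow 2).fun_add (ha.const_mul 2)).add_const 2).fun_mul hi)).div_const 2)).fun_add
    (((hb.fun_pow 2).fun_mul hi1).div_const 2)).fun_add
    ((ha.fun_mul hb).fun_mul hi)).fun_add (hb.fun_mul hi1)).fun_add ha).fun_add ((ha.fun_pow 2).div_const 2)).fun_add
    (((ha.add_const 1).const_mul (2 * (L - 1 / 2))).fun_mul hi)).fun_add
    (((hb.fun_mul hi1).fun_add ha).const_mul (2 * (L - 1 / 2)))).fun_add (hi.const_mul (2 * (L ^ 2 - L))))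
  have tot := ((hD.const_mul 2).fun_add (hM.const_mul (2 * L))).fun_add key
  convert! tot using 1
  generalize Real.log x = a
  generalize Real.log (1 - x) = b
  push_cast
  field_simp
  ring

lemma tend_PP : Tendsto PP (𝓝[<] 1) (𝓝 (2 * (riemannZeta 3).re
    + 2 * Real.log 2 * (-(Real.pi ^ 2 / 6)) + (1 + 2 * (Real.log 2 - 1 / 2)
      + 2 * (Real.log 2 ^ 2 - Real.log 2)))) := by
  refine ((tend_DD.const_mul 2).add (tend_MM.const_mul _)).add ?_
  have hp := tend_vb Real.log tend_y_log
  have hq := tend_vb (fun y => Real.log y ^ 2) tend_y_log2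
  have hr := tend_ab Real.log tend_y_log
  have ht := tend_ab (fun y => Real.log y ^ 2) tend_y_log2
  have hall := tend_log1.prodMk_nhds (tend_inv1.prodMk_nhds (hp.prodMk_nhds (hq.prodMk_nhds (hr.prodMk_nhds ht))))
  generalize Real.log 2 = L
  let P : ℝ × ℝ × ℝ × ℝ × ℝ × ℝ → ℝ := fun z =>
    let a := z.1
    let i := z.2.1
    let p := z.2.2.1
    let q := z.2.2.2.1
    let r := z.2.2.2.2.1
    let t := z.2.2.2.2.2
    (a ^ 2 * (2 - 2 * i - 4 * a) + (-2 * q - 4 * t) + 2 * a * (-2 * p - 4 * r)) / 4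
    + (L - 1 / 2) * (a * (2 - 2 * i - 4 * a) + (-2 * p - 4 * r))
    + (L ^ 2 - L) * (2 - 2 * i - 4 * a)
    + a ^ 3 / 3 + t + 2 * (L - 1 / 2) * a ^ 2 + 2 * (L - 1 / 2) * r + 4 * (L ^ 2 - L) * a
    + (a ^ 2 + 2 * a + 2) * i / 2 + q / 2 + r * i + p + a + a ^ 2 / 2
    + 2 * (L - 1 / 2) * (a + 1) * i + 2 * (L - 1 / 2) * (p + a) + 2 * (L ^ 2 - L) * i
  have hP : Continuous P := by fun_prop
  have h := (hP.tendsto _).comp hall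
  convert! h using 1
  · ext x
    simp only [P, RR, Function.comp]
    ring
  · congr 1
    simp only [P]
    ring

/-- The change of variables. -/
noncomputable def XX (s : ℝ) : ℝ := 1 / 2 + Real.sqrt (1 / 4 - Real.exp (-2 * s))

lemma exp_lt_quarter {s : ℝ} (hs : Real.log 2 < s) : Real.exp (-2 * s) < 1 / 4 := by
  have h4 : Real.exp (-2 * Real.log 2) = 1 / 4 := by
    rw [show -2 * Real.log 2 = -(Real.log 2 + Real.log 2) by ring, Real.exp_neg, Real.exp_add,
      Real.exp_log two_pos]
    norm_num
  rw [← h4]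
  exact Real.exp_lt_exp.2 (by linarith)

lemma XX_facts {s : ℝ} (hs : Real.log 2 < s) :
    1 / 2 < XX s ∧ XX s < 1 ∧ XX s * (1 - XX s) = Real.exp (-2 * s) := by
  have h1 := exp_lt_quarter hs
  have h2 := Real.exp_pos (-2 * s)
  have hw : 0 < Real.sqrt (1 / 4 - Real.exp (-2 * s)) := Real.sqrt_pos.2 (by linarith)
  have hsq := Real.sq_sqrt (show 0 ≤ 1 / 4 - Real.exp (-2 * s) by linarith)
  unfold XX
  refine ⟨by linarith, ?_, by nlinarith⟩
  nlinarith

lemma XX_deriv {s : ℝ} (hs : Real.log 2 < s) :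
    HasDerivAt XX (2 * XX s * (1 - XX s) / (2 * XX s - 1)) s := by
  obtain ⟨h1, h2, h3⟩ := XX_facts hs
  have hq := exp_lt_quarter hs
  have he : HasDerivAt (fun s : ℝ => Real.exp (-2 * s)) (Real.exp (-2 * s) * (-2 * 1)) s :=
    ((hasDerivAt_id s).const_mul (-2)).exp
  have := ((he.const_sub (1 / 4)).sqrt (by linarith)).const_add (1 / 2)
  refine this.congr_deriv ?_
  have hw : Real.sqrt (1 / 4 - Real.exp (-2 * s)) = XX s - 1 / 2 := by unfold XX; ring
  rw [hw, ← h3]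
  have : 2 * XX s - 1 ≠ 0 := by linarith
  have : XX s - 1 / 2 ≠ 0 := by linarith
  field_simp

lemma XX_cont : Continuous XX := by unfold XX; fun_prop

lemma XX_tend : Tendsto XX atTop (𝓝[<] 1) := by
  rw [tendsto_nhdsWithin_iff]
  constructor
  · have h : Tendsto (fun s : ℝ => Real.exp (-2 * s)) atTop (𝓝 0) :=
      Real.tendsto_exp_atBot.comp (tendsto_id.const_mul_atTop_of_neg (by norm_num))
    have h2 := ((h.const_sub (1 / 4)).sqrt).const_add (1 / 2)
    convert! h2 using 2
    rw [sub_zero, show (1 / 4 : ℝ) = (1 / 2) ^ 2 by norm_num, Real.sqrt_sq (by norm_num)]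
    norm_num
  · filter_upwards [eventually_gt_atTop (Real.log 2)] with s hs
    exact (XX_facts hs).2.1

/-- The integrand for large `s`. -/
noncomputable def ff (s : ℝ) : ℝ := (2 * (s - Real.log 2) + 1) *
  (-Real.exp (2 * s) + 2 + 2 * Real.exp (2 * s) * Real.sqrt (1 / 4 - Real.exp (-2 * s))
    - 4 * Real.log (1 / 2 + Real.sqrt (1 / 4 - Real.exp (-2 * s))))

lemma ff_eq {s : ℝ} (hs : Real.log 2 < s) :
    ff s = (2 * (s - Real.log 2) + 1) * (2 - 2 / XX s - 4 * Real.log (XX s)) := by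
  obtain ⟨h1, h2, h3⟩ := XX_facts hs
  have hw : Real.sqrt (1 / 4 - Real.exp (-2 * s)) = XX s - 1 / 2 := by unfold XX; ring
  have he : Real.exp (2 * s) = 1 / (XX s * (1 - XX s)) := by
    rw [h3, show -2 * s = -(2 * s) by ring, Real.exp_neg, one_div, inv_inv]
  unfold ff
  rw [hw, he, show 1 / 2 + (XX s - 1 / 2) = XX s by ring]
  have : XX s ≠ 0 := by linarith
  have : 1 - XX s ≠ 0 := by linarith
  field_simp
  ring

lemma ff_deriv {s : ℝ} (hs : Real.log 2 < s) : HasDerivAt (fun s => PP (XX s)) (ff s) s := by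
  obtain ⟨h1, h2, h3⟩ := XX_facts hs
  have := (PP_deriv (x := XX s) (by linarith) h2).comp s (XX_deriv hs)
  refine this.congr_deriv ?_
  rw [ff_eq hs]
  have hl : Real.log (XX s) + Real.log (1 - XX s) = -2 * s := by
    rw [← Real.log_mul (by linarith) (by linarith), h3, Real.log_exp]
  have hl' : Real.log (1 - XX s) = -2 * s - Real.log (XX s) := by linarith
  rw [hl']
  have : XX s ≠ 0 := by linarith
  have : 1 - XX s ≠ 0 := by linarith
  have : 2 * XX s - 1 ≠ 0 := by linarith
  field_simp
  ring

lemma ff_nonneg {s : ℝ} (hs : Real.log 2 < s) : 0 ≤ ff s := by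
  obtain ⟨h1, h2, h3⟩ := XX_facts hs
  rw [ff_eq hs]
  refine mul_nonneg (by linarith) ?_
  generalize XX s = x at *
  have hx : 0 < x := by linarith
  have hi1 : 1 < 1 / x := by rw [lt_div_iff₀ hx]; linarith
  have hi2 : 1 / x < 2 := by rw [div_lt_iff₀ hx]; linarith
  have h := Real.le_log_one_add_of_nonneg (x := 1 / x - 1) (by linarith)
  rw [show 1 + (1 / x - 1) = x⁻¹ by rw [one_div]; ring, Real.log_inv, div_le_iff₀ (by linarith)] at h
  have h4 : 2 / x = 2 * (1 / x) := by ring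
  rw [h4]
  generalize 1 / x = t at *
  have hl : 0 ≤ -Real.log x := by have := Real.log_nonpos hx.le h2.le; linarith
  nlinarith

lemma XX_log2 : XX (Real.log 2) = 1 / 2 := by
  have h4 : Real.exp (-2 * Real.log 2) = 1 / 4 := by
    rw [show -2 * Real.log 2 = -(Real.log 2 + Real.log 2) by ring, Real.exp_neg, Real.exp_add,
      Real.exp_log two_pos]
    norm_num
  unfold XX
  rw [h4]; simp

lemma PP_cont : ContinuousWithinAt (fun s => PP (XX s)) (Ici (Real.log 2)) (Real.log 2) := by
  have h : ContinuousAt PP (XX (Real.log 2)) := by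
    rw [XX_log2]
    exact (PP_deriv (by norm_num) (by norm_num)).continuousAt
  exact (h.comp XX_cont.continuousAt).continuousWithinAt

lemma ff_int : IntegrableOn ff (Ioi (Real.log 2)) :=
  integrableOn_Ioi_deriv_of_nonneg PP_cont (fun _ hs => ff_deriv hs) (fun _ hs => ff_nonneg hs)
    (tend_PP.comp XX_tend)

lemma PP_half : PP (1 / 2) = RR (Real.log 2) (-Real.log 2) (-Real.log 2) 2 := by
  have h : Real.log (1 / 2) = -Real.log 2 := by rw [one_div, Real.log_inv]
  unfold PP DD MM
  rw [show (1 : ℝ) - 1 / 2 = 1 / 2 by norm_num, h]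
  norm_num

lemma ff_integral : ∫ s in Ioi (Real.log 2), ff s = (2 * (riemannZeta 3).re
    + 2 * Real.log 2 * (-(Real.pi ^ 2 / 6)) + (1 + 2 * (Real.log 2 - 1 / 2)
      + 2 * (Real.log 2 ^ 2 - Real.log 2))) - RR (Real.log 2) (-Real.log 2) (-Real.log 2) 2 := by
  rw [integral_Ioi_of_hasDerivAt_of_nonneg PP_cont (fun _ hs => ff_deriv hs)
    (fun _ hs => ff_nonneg hs) (tend_PP.comp XX_tend), XX_log2, PP_half]

/-- The integrand for `s ≤ 0`. -/
noncomputable def f1 (s : ℝ) : ℝ := (2 * (s - Real.log 2) + 1) * Real.exp (2 * s)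

lemma f1_deriv (s : ℝ) : HasDerivAt (fun s => (s - Real.log 2) * Real.exp (2 * s)) (f1 s) s := by
  have he : HasDerivAt (fun s : ℝ => Real.exp (2 * s)) (Real.exp (2 * s) * (2 * 1)) s :=
    ((hasDerivAt_id s).const_mul 2).exp
  have := ((hasDerivAt_id s).sub_const (Real.log 2)).fun_mul he
  refine this.congr_deriv ?_
  simp only [f1, id]
  ring

lemma f1_tend : Tendsto (fun s => (s - Real.log 2) * Real.exp (2 * s)) atBot (𝓝 0) := by
  have h1 := (Real.tendsto_pow_mul_exp_neg_atTop_nhds_zero 1).comp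
    (tendsto_id.const_mul_atBot_of_neg (show (-2 : ℝ) < 0 by norm_num))
  have h0 := (Real.tendsto_pow_mul_exp_neg_atTop_nhds_zero 0).comp
    (tendsto_id.const_mul_atBot_of_neg (show (-2 : ℝ) < 0 by norm_num))
  have := (h1.const_mul (-1 / 2)).sub (h0.const_mul (Real.log 2))
  simp only [mul_zero, sub_zero] at this
  refine this.congr fun s => ?_
  simp only [Function.comp, id]
  rw [show -(-2 * s) = 2 * s by ring]
  ring

lemma f1_int : IntegrableOn f1 (Iic 0) := by
  have h : IntegrableOn (fun s => f1 (-s)) (Ioi 0) := by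
    refine integrableOn_Ioi_deriv_of_nonpos' (a := 0) (l := -0)
      (g := fun s => -((-s - Real.log 2) * Real.exp (2 * (-s)))) ?_ ?_ ?_
    · intro s _
      have := ((f1_deriv (-s)).comp s (hasDerivAt_neg s)).fun_neg
      refine this.congr_deriv ?_
      ring
    · intro s hs
      have hs' : 0 < s := hs
      have := Real.log_two_gt_d9
      unfold f1
      exact mul_nonpos_of_nonpos_of_nonneg (by linarith) (Real.exp_pos _).le
    · exact (f1_tend.comp tendsto_neg_atTop_atBot).neg
  rw [integrableOn_Iic_iff_integrableOn_Iio]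
  have h3 := ((Measure.measurePreserving_neg (volume : Measure ℝ)).integrableOn_comp_preimage
    (Homeomorph.neg ℝ).measurableEmbedding (f := f1) (s := Iio 0)).1
  refine h3 ?_
  have h4 : (Neg.neg : ℝ → ℝ) ⁻¹' (Iio 0) = Ioi 0 := by
    ext x; simp
  rw [h4]
  exact h

lemma f1_integral : ∫ s in Iic (0 : ℝ), f1 s = -Real.log 2 := by
  rw [integral_Iic_of_hasDerivAt_of_tendsto' (fun s _ => f1_deriv s) f1_int f1_tend]
  simp

/-- The middle integrand. -/
noncomputable def f2 (s : ℝ) : ℝ :=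
  (2 * (s - Real.log 2) + 1) * (-Real.exp (2 * s) + 2 + 4 * s)

lemma f2_cont : Continuous f2 := by unfold f2; fun_prop

lemma f2_deriv (s : ℝ) : HasDerivAt (fun s => -((s - Real.log 2) * Real.exp (2 * s)) +
    (8 / 3 * s ^ 3 + (4 - 4 * Real.log 2) * s ^ 2 + (2 - 4 * Real.log 2) * s)) (f2 s) s := by
  have h := ((((hasDerivAt_pow 3 s).const_mul (8 / 3)).fun_add
    ((hasDerivAt_pow 2 s).const_mul (4 - 4 * Real.log 2))).fun_add
      ((hasDerivAt_id s).const_mul (2 - 4 * Real.log 2)))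
  refine ((f1_deriv s).fun_neg.fun_add h).congr_deriv ?_
  simp only [f1, f2]
  push_cast
  ring

lemma f2_integral : ∫ s in Ioc 0 (Real.log 2), f2 s = (8 / 3 * Real.log 2 ^ 3 +
    (4 - 4 * Real.log 2) * Real.log 2 ^ 2 + (2 - 4 * Real.log 2) * Real.log 2) - Real.log 2 := by
  rw [← intervalIntegral.integral_of_le (Real.log_nonneg one_le_two),
    intervalIntegral.integral_eq_sub_of_hasDerivAt (fun s _ => f2_deriv s)
      (f2_cont.intervalIntegrable _ _)]
  simp

theorem rho_one :
    (∫ s : ℝ, (2 * (s - Real.log 2) + 1) * etaLog s) =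
      12 * (riemannZeta 3).re / Real.pi ^ 2 - 2 * Real.log 2 := by
  have hL : 0 < Real.log 2 := Real.log_pos one_lt_two
  have e1 : EqOn (fun s => (2 * (s - Real.log 2) + 1) * etaLog s)
      (fun s => 6 / Real.pi ^ 2 * f1 s) (Iic 0) := by
    intro s hs
    have hs' : s ≤ 0 := hs
    simp only [etaLog, if_pos hs', f1]
    ring
  have e2 : EqOn (fun s => (2 * (s - Real.log 2) + 1) * etaLog s)
      (fun s => 6 / Real.pi ^ 2 * f2 s) (Ioc 0 (Real.log 2)) := by
    intro s hs
    simp only [etaLog, if_neg (not_le.2 hs.1), if_pos hs.2, f2]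
    ring
  have e3 : EqOn (fun s => (2 * (s - Real.log 2) + 1) * etaLog s)
      (fun s => 6 / Real.pi ^ 2 * ff s) (Ioi (Real.log 2)) := by
    intro s hs
    have hs' : Real.log 2 < s := hs
    simp only [etaLog, if_neg (not_le.2 (hL.trans hs')), if_neg (not_le.2 hs'), ff]
    ring
  have i1 : IntegrableOn (fun s => (2 * (s - Real.log 2) + 1) * etaLog s) (Iic 0) :=
    IntegrableOn.congr_fun (Integrable.const_mul f1_int _) e1.symm measurableSet_Iic
  have i2 : IntegrableOn (fun s => (2 * (s - Real.log 2) + 1) * etaLog s) (Ioc 0 (Real.log 2)) :=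
    IntegrableOn.congr_fun (Integrable.const_mul
      ((f2_cont.integrableOn_Icc).mono_set Ioc_subset_Icc_self) _) e2.symm measurableSet_Ioc
  have i3 : IntegrableOn (fun s => (2 * (s - Real.log 2) + 1) * etaLog s) (Ioi (Real.log 2)) :=
    IntegrableOn.congr_fun (Integrable.const_mul ff_int _) e3.symm measurableSet_Ioi
  have i23 : IntegrableOn (fun s => (2 * (s - Real.log 2) + 1) * etaLog s) (Ioi 0) := by
    rw [← Ioc_union_Ioi_eq_Ioi hL.le]
    exact i2.union i3
  rw [← intervalIntegral.integral_Iic_add_Ioi i1 i23, ← Ioc_union_Ioi_eq_Ioi hL.le,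
    setIntegral_union (Ioc_disjoint_Ioi le_rfl) measurableSet_Ioi i2 i3,
    setIntegral_congr_fun measurableSet_Iic e1, setIntegral_congr_fun measurableSet_Ioc e2,
    setIntegral_congr_fun measurableSet_Ioi e3, integral_const_mul, integral_const_mul,
    integral_const_mul, f1_integral, f2_integral, ff_integral]
  unfold RR
  have := Real.pi_ne_zero
  field_simp
  ring
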